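/- arXiv:1202.1660 — 3 statements merged into one kernel-verified Lean document; each statement's English description precedes it below -/
import Mathlib

section
/- Let Γ be a fixed real n×r matrix, and let X : ℝ → M_{n,r}(ℝ), Φ : ℝ → so(n), Ψ : ℝ → so(r) be differentiable curves. For λ ∈ ℝ define the (n+r)×(n+r) matrices L(λ) with blocks (-λΦ, X+λ²Γ; -Xᵀ-λ²Γᵀ, λΨ) and A(λ) with blocks (-Φ, λΓ; -λΓᵀ, Ψ). Then d/dt L(λ) = [L(λ), A(λ)] holds at time t for every λ ∈ ℝ if and only if at time t one has X' = ΦX + XΨ, Φ' = XΓᵀ - ΓXᵀ, and Ψ' = ΓᵀX - XᵀΓ. (Lax representation of the V(n,r)-pendulum for κ = 1.) -/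
open Matrix

/-- Entrywise derivative of a matrix-valued curve. -/
def HasMatDerivAt {m k : Type*} {E : Type*} [NormedAddCommGroup E] [NormedSpace ℝ E]
    (F : ℝ → Matrix m k E) (F' : Matrix m k E) (t : ℝ) : Prop :=
  ∀ i j, HasDerivAt (fun s => F s i j) (F' i j) t

/-- The Lax matrix `L(λ)` of the `V(n,r)`-pendulum for `κ = 1`. -/
def pendulumLax {n r : ℕ} (Γ X : Matrix (Fin n) (Fin r) ℝ)
    (Φ : Matrix (Fin n) (Fin n) ℝ) (Ψ : Matrix (Fin r) (Fin r) ℝ) (lam : ℝ) :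
    Matrix (Fin n ⊕ Fin r) (Fin n ⊕ Fin r) ℝ :=
  fromBlocks (-(lam • Φ)) (X + (lam ^ 2) • Γ) (-(Xᵀ + (lam ^ 2) • Γᵀ)) (lam • Ψ)

/-- The matrix `A(λ)` of the Lax pair of the `V(n,r)`-pendulum for `κ = 1`. -/
def pendulumLaxA {n r : ℕ} (Γ : Matrix (Fin n) (Fin r) ℝ)
    (Φ : Matrix (Fin n) (Fin n) ℝ) (Ψ : Matrix (Fin r) (Fin r) ℝ) (lam : ℝ) :
    Matrix (Fin n ⊕ Fin r) (Fin n ⊕ Fin r) ℝ :=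
  fromBlocks (-Φ) (lam • Γ) (-(lam • Γᵀ)) Ψ

/-!
`L(λ)` is affine in `(X, Φ, Ψ)` and its linear part is the matrix `L(λ)` for `Γ = 0`, so the
derivative along the curves is this linear part at `(X', Φ', Ψ')`. In `[L(λ), A(λ)]` the terms
quadratic in `Φ`, `Ψ` or `Γ` and those in which `Γ` meets `Φ` or `Ψ` cancel; for skew `Φ` and `Ψ`
what is left is the same linear part at the right-hand sides of the equations of motion. The Lax
equation therefore equates two values of one linear map, which is injective as soon as `λ ≠ 0`.
-/

namespace HasMatDerivAt

variable {m k m' k' E : Type*} [NormedAddCommGroup E] [NormedSpace ℝ E] {t : ℝ}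
  {F : ℝ → Matrix m k E} {F' F'' : Matrix m k E}

theorem unique (h : HasMatDerivAt F F' t) (h' : HasMatDerivAt F F'' t) : F' = F'' :=
  Matrix.ext fun i j => (h i j).unique (h' i j)

theorem iff_eq (h : HasMatDerivAt F F' t) : HasMatDerivAt F F'' t ↔ F' = F'' :=
  ⟨h.unique, fun h_eq => h_eq ▸ h⟩

theorem neg (h : HasMatDerivAt F F' t) : HasMatDerivAt (fun s => -F s) (-F') t :=
  fun i j => (h i j).neg

theorem add_const (h : HasMatDerivAt F F' t) (C : Matrix m k E) :
    HasMatDerivAt (fun s => F s + C) F' t :=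
  fun i j => (h i j).add_const (C i j)

theorem const_smul (c : ℝ) (h : HasMatDerivAt F F' t) :
    HasMatDerivAt (fun s => c • F s) (c • F') t :=
  fun i j => (h i j).const_smul c

theorem transpose (h : HasMatDerivAt F F' t) : HasMatDerivAt (fun s => (F s)ᵀ) F'ᵀ t :=
  fun i j => h j i

theorem fromBlocks {A : ℝ → Matrix m k E} {B : ℝ → Matrix m k' E} {C : ℝ → Matrix m' k E}
    {D : ℝ → Matrix m' k' E} {A' : Matrix m k E} {B' : Matrix m k' E} {C' : Matrix m' k E}
    {D' : Matrix m' k' E} (hA : HasMatDerivAt A A' t) (hB : HasMatDerivAt B B' t)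
    (hC : HasMatDerivAt C C' t) (hD : HasMatDerivAt D D' t) :
    HasMatDerivAt (fun s => Matrix.fromBlocks (A s) (B s) (C s) (D s))
      (Matrix.fromBlocks A' B' C' D') t := by
  rintro (i | i) (j | j)
  · exact hA i j
  · exact hB i j
  · exact hC i j
  · exact hD i j

end HasMatDerivAt

section Pendulum

variable {n r : ℕ}

theorem pendulumLax_zero (X : Matrix (Fin n) (Fin r) ℝ) (Φ : Matrix (Fin n) (Fin n) ℝ)
    (Ψ : Matrix (Fin r) (Fin r) ℝ) (lam : ℝ) :
    pendulumLax 0 X Φ Ψ lam = fromBlocks (-(lam • Φ)) X (-Xᵀ) (lam • Ψ) := by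
  simp only [pendulumLax, transpose_zero, smul_zero, add_zero]

theorem pendulumLax_inj {Γ X₁ X₂ : Matrix (Fin n) (Fin r) ℝ}
    {Φ₁ Φ₂ : Matrix (Fin n) (Fin n) ℝ} {Ψ₁ Ψ₂ : Matrix (Fin r) (Fin r) ℝ} {lam : ℝ}
    (hlam : lam ≠ 0) :
    pendulumLax Γ X₁ Φ₁ Ψ₁ lam = pendulumLax Γ X₂ Φ₂ Ψ₂ lam ↔ X₁ = X₂ ∧ Φ₁ = Φ₂ ∧ Ψ₁ = Ψ₂ := by
  constructor
  · intro h
    obtain ⟨hΦ, hX, -, hΨ⟩ := fromBlocks_inj.mp h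
    exact ⟨add_right_cancel hX, smul_right_injective _ hlam (neg_injective hΦ),
      smul_right_injective _ hlam hΨ⟩
  · rintro ⟨rfl, rfl, rfl⟩
    rfl

theorem hasMatDerivAt_pendulumLax (Γ : Matrix (Fin n) (Fin r) ℝ)
    {X : ℝ → Matrix (Fin n) (Fin r) ℝ} {Φ : ℝ → Matrix (Fin n) (Fin n) ℝ}
    {Ψ : ℝ → Matrix (Fin r) (Fin r) ℝ} {X' : Matrix (Fin n) (Fin r) ℝ}
    {Φ' : Matrix (Fin n) (Fin n) ℝ} {Ψ' : Matrix (Fin r) (Fin r) ℝ} {t : ℝ}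
    (hX : HasMatDerivAt X X' t) (hΦ : HasMatDerivAt Φ Φ' t) (hΨ : HasMatDerivAt Ψ Ψ' t)
    (lam : ℝ) :
    HasMatDerivAt (fun s => pendulumLax Γ (X s) (Φ s) (Ψ s) lam)
      (pendulumLax 0 X' Φ' Ψ' lam) t := by
  rw [pendulumLax_zero]
  exact (hΦ.const_smul lam).neg.fromBlocks (hX.add_const _) (hX.transpose.add_const _).neg
    (hΨ.const_smul lam)

theorem pendulumLax_commutator (Γ X : Matrix (Fin n) (Fin r) ℝ)
    {Φ : Matrix (Fin n) (Fin n) ℝ} {Ψ : Matrix (Fin r) (Fin r) ℝ}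
    (hΦ : Φᵀ = -Φ) (hΨ : Ψᵀ = -Ψ) (lam : ℝ) :
    pendulumLax Γ X Φ Ψ lam * pendulumLaxA Γ Φ Ψ lam
        - pendulumLaxA Γ Φ Ψ lam * pendulumLax Γ X Φ Ψ lam
      = pendulumLax 0 (Φ * X + X * Ψ) (X * Γᵀ - Γ * Xᵀ) (Γᵀ * X - Xᵀ * Γ) lam := by
  have lower_left : -(Φ * X + X * Ψ)ᵀ = Xᵀ * Φ + Ψ * Xᵀ := by
    rw [transpose_add, transpose_mul, transpose_mul, hΦ, hΨ, Matrix.mul_neg, Matrix.neg_mul]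
    abel
  rw [pendulumLax_zero, lower_left, pendulumLax, pendulumLaxA, fromBlocks_multiply,
    fromBlocks_multiply, sub_eq_add_neg, fromBlocks_neg, fromBlocks_add]
  congr 1 <;>
  · simp only [Matrix.mul_add, Matrix.add_mul, Matrix.mul_neg, Matrix.neg_mul, Matrix.smul_mul,
      Matrix.mul_smul]
    module

end Pendulum

theorem pendulum_lax_representation_general {n r : ℕ} (Γ : Matrix (Fin n) (Fin r) ℝ)
    {X : ℝ → Matrix (Fin n) (Fin r) ℝ} {Φ : ℝ → Matrix (Fin n) (Fin n) ℝ}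
    {Ψ : ℝ → Matrix (Fin r) (Fin r) ℝ} {X' : Matrix (Fin n) (Fin r) ℝ}
    {Φ' : Matrix (Fin n) (Fin n) ℝ} {Ψ' : Matrix (Fin r) (Fin r) ℝ} {t : ℝ}
    (hΦskew : (Φ t)ᵀ = -Φ t) (hΨskew : (Ψ t)ᵀ = -Ψ t)
    (hX : HasMatDerivAt X X' t) (hΦ : HasMatDerivAt Φ Φ' t) (hΨ : HasMatDerivAt Ψ Ψ' t)
    {S : Set ℝ} (hS : ∃ lam ∈ S, lam ≠ 0) :
    (∀ lam ∈ S,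
        HasMatDerivAt (fun s => pendulumLax Γ (X s) (Φ s) (Ψ s) lam)
          (pendulumLax Γ (X t) (Φ t) (Ψ t) lam * pendulumLaxA Γ (Φ t) (Ψ t) lam
            - pendulumLaxA Γ (Φ t) (Ψ t) lam * pendulumLax Γ (X t) (Φ t) (Ψ t) lam)
          t)
      ↔ (X' = Φ t * X t + X t * Ψ t ∧ Φ' = X t * Γᵀ - Γ * (X t)ᵀ
          ∧ Ψ' = Γᵀ * X t - (X t)ᵀ * Γ) := by
  simp only [(hasMatDerivAt_pendulumLax Γ hX hΦ hΨ _).iff_eq,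
    pendulumLax_commutator Γ (X t) hΦskew hΨskew]
  constructor
  · obtain ⟨lam, hmem, hlam⟩ := hS
    exact fun lax => (pendulumLax_inj hlam).mp (lax lam hmem)
  · rintro ⟨rfl, rfl, rfl⟩ _ _
    rfl

/-- Lax representation of the `V(n,r)`-pendulum for `κ = 1`:
`d/dt L(λ) = [L(λ), A(λ)]` for all `λ` iff `X' = ΦX + XΨ`, `Φ' = XΓᵀ - ΓXᵀ`,
`Ψ' = ΓᵀX - XᵀΓ`. -/
theorem pendulum_lax_representation (n r : ℕ)
    (Γ : Matrix (Fin n) (Fin r) ℝ)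
    (X : ℝ → Matrix (Fin n) (Fin r) ℝ)
    (Φ : ℝ → Matrix (Fin n) (Fin n) ℝ) (Ψ : ℝ → Matrix (Fin r) (Fin r) ℝ)
    (hΦskew : ∀ s, (Φ s)ᵀ = -Φ s) (hΨskew : ∀ s, (Ψ s)ᵀ = -Ψ s)
    (X' : Matrix (Fin n) (Fin r) ℝ) (Φ' : Matrix (Fin n) (Fin n) ℝ)
    (Ψ' : Matrix (Fin r) (Fin r) ℝ) (t : ℝ)
    (hX : HasMatDerivAt X X' t) (hΦ : HasMatDerivAt Φ Φ' t)
    (hΨ : HasMatDerivAt Ψ Ψ' t) :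
    (∀ lam : ℝ,
        HasMatDerivAt (fun s => pendulumLax Γ (X s) (Φ s) (Ψ s) lam)
          (pendulumLax Γ (X t) (Φ t) (Ψ t) lam * pendulumLaxA Γ (Φ t) (Ψ t) lam
            - pendulumLaxA Γ (Φ t) (Ψ t) lam * pendulumLax Γ (X t) (Φ t) (Ψ t) lam)
          t)
      ↔ (X' = Φ t * X t + X t * Ψ t ∧ Φ' = X t * Γᵀ - Γ * (X t)ᵀ
          ∧ Ψ' = Γᵀ * X t - (X t)ᵀ * Γ) := by
  simpa only [Set.mem_univ, forall_const] using pendulum_lax_representation_general Γ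
    (hΦskew t) (hΨskew t) hX hΦ hΨ ⟨1, Set.mem_univ 1, one_ne_zero⟩
end

section
/- Let Ξ be a real skew-symmetric n×n matrix and κ ∈ ℝ. Suppose e₁, e₂, p₁, p₂ : ℝ → ℝⁿ are differentiable curves which at time t satisfy the constraints ⟨e₁,e₁⟩ = ⟨e₂,e₂⟩ = 1, ⟨e₁,e₂⟩ = ⟨e₁,p₁⟩ = ⟨e₂,p₂⟩ = 0, ⟨e₁,p₂⟩ + ⟨e₂,p₁⟩ = 0, and the V(n,2)-pendulum equations e₁' = p₁ - (1+2κ)⟨e₁,p₂⟩e₂, e₂' = p₂ - (1+2κ)⟨e₂,p₁⟩e₁, p₁' = Ξe₂ + (1+2κ)⟨p₁,e₂⟩p₂ + λ₁₁e₁ + λ₁₂e₂, p₂' = -Ξe₁ + (1+2κ)⟨p₂,e₁⟩p₁ + λ₂₁e₁ + λ₂₂e₂, with λ₁₁ = -⟨p₁,p₁⟩ - ⟨e₁,Ξe₂⟩, λ₁₂ = λ₂₁ = -⟨p₁,p₂⟩, λ₂₂ = -⟨p₂,p₂⟩ - ⟨e₁,Ξe₂⟩. Then, with Φ = p₁∧e₁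 + p₂∧e₂, at time t one has d/dt(e₁∧e₂) = [Φ, e₁∧e₂] and dΦ/dt = [e₁∧e₂, Ξ]. -/
/-!
A skew-symmetric matrix `A` acts on bivectors by the Leibniz rule `[A, u∧v] = Au∧v + u∧Av`.
On an orthonormal frame, `Φe₁` and `Φe₂` agree with `p₁` and `p₂` up to terms in `span {e₁, e₂}`,
so `[Φ, e₁∧e₂] = p₁∧e₂ + e₁∧p₂` when `⟨e₁,p₁⟩ + ⟨e₂,p₂⟩ = 0`; this is also `d/dt(e₁∧e₂)`, because
the remaining terms of `e₁'` and `e₂'` are killed by alternation.  In `dΦ/dt` the diagonal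
multipliers drop out by alternation, the off-diagonal ones by their symmetry, and the `κ`-terms
cancel between `pᵢ'∧eᵢ` and `pᵢ∧eᵢ'`.  What is left is `-(Ξe₁∧e₂ + e₁∧Ξe₂) = [e₁∧e₂, Ξ]`.
-/

open Matrix

/-- Entrywise derivative of a vector-valued curve. -/
def HasVecDerivAt {m : Type*} (f : ℝ → m → ℝ) (f' : m → ℝ) (t : ℝ) : Prop :=
  ∀ i, HasDerivAt (fun s => f s i) (f' i) t

/-- The wedge `u∧v = uvᵀ - vuᵀ` of two vectors in `ℝⁿ`. -/
def wedge {n : ℕ} (u v : Fin n → ℝ) : Matrix (Fin n) (Fin n) ℝ :=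
  vecMulVec u v - vecMulVec v u

section Wedge

variable {n : ℕ} (u v w : Fin n → ℝ) (c : ℝ)

theorem wedge_self : wedge u u = 0 :=
  sub_self _

theorem neg_wedge_swap : -wedge u v = wedge v u :=
  neg_sub _ _

theorem wedge_add_left : wedge (u + v) w = wedge u w + wedge v w := by
  simp only [wedge, add_vecMulVec, vecMulVec_add]
  abel

theorem wedge_smul_left : wedge (c • u) v = c • wedge u v := by
  simp only [wedge, smul_vecMulVec, vecMulVec_smul, smul_sub]

theorem wedge_neg_left : wedge (-u) v = -wedge u v := by
  rw [← neg_one_smul ℝ u, wedge_smul_left, neg_one_smul]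

theorem wedge_sub_left : wedge (u - v) w = wedge u w - wedge v w := by
  rw [sub_eq_add_neg, wedge_add_left, wedge_neg_left, sub_eq_add_neg]

theorem wedge_smul_right : wedge u (c • v) = c • wedge u v := by
  rw [← neg_wedge_swap, wedge_smul_left, ← smul_neg, neg_wedge_swap]

theorem wedge_sub_right : wedge u (v - w) = wedge u v - wedge u w := by
  simp only [← neg_wedge_swap _ u, wedge_sub_left, neg_sub, neg_sub_neg]

theorem transpose_wedge : (wedge u v)ᵀ = -wedge u v := by
  simp only [wedge, transpose_sub, transpose_vecMulVec, neg_sub]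

theorem wedge_mulVec : wedge u v *ᵥ w = (v ⬝ᵥ w) • u - (u ⬝ᵥ w) • v := by
  simp only [wedge, sub_mulVec, vecMulVec_mulVec, op_smul_eq_smul]

theorem lie_wedge_of_transpose_eq_neg {A : Matrix (Fin n) (Fin n) ℝ} (hA : Aᵀ = -A) :
    ⁅A, wedge u v⁆ = wedge (A *ᵥ u) v + wedge u (A *ᵥ v) := by
  have vecMul_eq (x : Fin n → ℝ) : x ᵥ* A = -(A *ᵥ x) := by
    rw [← mulVec_transpose, hA, neg_mulVec]
  simp only [Ring.lie_def, wedge, mul_sub, sub_mul, mul_vecMulVec, vecMulVec_mul, vecMul_eq,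
    vecMulVec_neg]
  abel

theorem lie_wedge_add_wedge_of_orthonormal {e₁ e₂ : Fin n → ℝ} (p₁ p₂ : Fin n → ℝ)
    (h₁₁ : e₁ ⬝ᵥ e₁ = 1) (h₂₂ : e₂ ⬝ᵥ e₂ = 1) (h₁₂ : e₁ ⬝ᵥ e₂ = 0) :
    ⁅wedge p₁ e₁ + wedge p₂ e₂, wedge e₁ e₂⁆ =
      wedge p₁ e₂ + wedge e₁ p₂ - (e₁ ⬝ᵥ p₁ + e₂ ⬝ᵥ p₂) • wedge e₁ e₂ := by
  set Φ := wedge p₁ e₁ + wedge p₂ e₂ with hΦ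
  have Φ_skew : Φᵀ = -Φ := by
    rw [hΦ, transpose_add, transpose_wedge, transpose_wedge, neg_add]
  have h₂₁ : e₂ ⬝ᵥ e₁ = 0 := dotProduct_comm e₁ e₂ ▸ h₁₂
  have Φ_mulVec_e₁ : Φ *ᵥ e₁ = p₁ - (e₁ ⬝ᵥ p₁) • e₁ - (p₂ ⬝ᵥ e₁) • e₂ := by
    rw [hΦ, add_mulVec, wedge_mulVec, wedge_mulVec, h₁₁, h₂₁, dotProduct_comm p₁]
    module
  have Φ_mulVec_e₂ : Φ *ᵥ e₂ = p₂ - (e₂ ⬝ᵥ p₂) • e₂ - (p₁ ⬝ᵥ e₂) • e₁ := by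
    rw [hΦ, add_mulVec, wedge_mulVec, wedge_mulVec, h₂₂, h₁₂, dotProduct_comm p₂]
    module
  rw [lie_wedge_of_transpose_eq_neg _ _ Φ_skew, Φ_mulVec_e₁, Φ_mulVec_e₂]
  simp only [wedge_sub_left, wedge_sub_right, wedge_smul_left, wedge_smul_right, wedge_self]
  module

end Wedge

theorem HasMatDerivAt.add {m k E : Type*} [NormedAddCommGroup E] [NormedSpace ℝ E]
    {F G : ℝ → Matrix m k E} {F' G' : Matrix m k E} {t : ℝ}
    (hF : HasMatDerivAt F F' t) (hG : HasMatDerivAt G G' t) :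
    HasMatDerivAt (fun s => F s + G s) (F' + G') t :=
  fun i j => (hF i j).add (hG i j)

theorem HasVecDerivAt.wedge {n : ℕ} {u v : ℝ → Fin n → ℝ} {u' v' : Fin n → ℝ} {t : ℝ}
    (hu : HasVecDerivAt u u' t) (hv : HasVecDerivAt v v' t) :
    HasMatDerivAt (fun s => wedge (u s) (v s)) (wedge u' (v t) + wedge (u t) v') t := by
  intro i j
  refine (((hu i).mul (hv j)).sub ((hv i).mul (hu j))).congr_deriv ?_
  simp only [_root_.wedge, Matrix.add_apply, Matrix.sub_apply, vecMulVec_apply]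
  ring

/-- The pendulum has `a = (1+2κ)⟨e₁,p₂⟩`, `b = (1+2κ)⟨e₂,p₁⟩`; the `lᵢⱼ` are the Lagrange
multipliers of the constraints. -/
theorem v_n2_pendulum_lie_form_general {n : ℕ}
    {Ξ : Matrix (Fin n) (Fin n) ℝ} (hΞ : Ξᵀ = -Ξ)
    {e₁ e₂ p₁ p₂ : ℝ → Fin n → ℝ} {t a b l₁₁ l₁₂ l₂₂ : ℝ}
    (h₁₁ : e₁ t ⬝ᵥ e₁ t = 1) (h₂₂ : e₂ t ⬝ᵥ e₂ t = 1) (h₁₂ : e₁ t ⬝ᵥ e₂ t = 0)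
    (hep : e₁ t ⬝ᵥ p₁ t + e₂ t ⬝ᵥ p₂ t = 0)
    (he₁ : HasVecDerivAt e₁ (p₁ t - a • e₂ t) t)
    (he₂ : HasVecDerivAt e₂ (p₂ t - b • e₁ t) t)
    (hp₁ : HasVecDerivAt p₁ (Ξ *ᵥ e₂ t + b • p₂ t + l₁₁ • e₁ t + l₁₂ • e₂ t) t)
    (hp₂ : HasVecDerivAt p₂ (-(Ξ *ᵥ e₁ t) + a • p₁ t + l₁₂ • e₁ t + l₂₂ • e₂ t) t) :
    HasMatDerivAt (fun s => wedge (e₁ s) (e₂ s))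
      ⁅wedge (p₁ t) (e₁ t) + wedge (p₂ t) (e₂ t), wedge (e₁ t) (e₂ t)⁆ t ∧
    HasMatDerivAt (fun s => wedge (p₁ s) (e₁ s) + wedge (p₂ s) (e₂ s))
      ⁅wedge (e₁ t) (e₂ t), Ξ⁆ t := by
  constructor
  · convert he₁.wedge he₂ using 1
    rw [lie_wedge_add_wedge_of_orthonormal _ _ h₁₁ h₂₂ h₁₂, hep]
    simp only [wedge_sub_left, wedge_sub_right, wedge_smul_left, wedge_smul_right, wedge_self,
      smul_zero, zero_smul, sub_zero]
  · convert (hp₁.wedge he₁).add (hp₂.wedge he₂) using 1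
    have lie_eq : ⁅wedge (e₁ t) (e₂ t), Ξ⁆ =
        -(wedge (Ξ *ᵥ e₁ t) (e₂ t) + wedge (e₁ t) (Ξ *ᵥ e₂ t)) := by
      rw [← lie_wedge_of_transpose_eq_neg _ _ hΞ, Ring.lie_def, Ring.lie_def, neg_sub]
    rw [lie_eq, ← neg_wedge_swap (Ξ *ᵥ e₂ t)]
    simp only [wedge_add_left, wedge_sub_right, wedge_neg_left, wedge_smul_left,
      wedge_smul_right, wedge_self, ← neg_wedge_swap (e₁ t) (e₂ t)]
    module

/-- Along the `V(n,2)`-pendulum flow, with `Φ = p₁∧e₁ + p₂∧e₂`,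
one has `d/dt(e₁∧e₂) = [Φ, e₁∧e₂]` and `dΦ/dt = [e₁∧e₂, Ξ]`. -/
theorem v_n2_pendulum_lie_form (n : ℕ)
    (Ξ : Matrix (Fin n) (Fin n) ℝ) (hΞ : Ξᵀ = -Ξ) (κ : ℝ)
    (e₁ e₂ p₁ p₂ : ℝ → Fin n → ℝ)
    (e₁' e₂' p₁' p₂' : Fin n → ℝ) (t : ℝ)
    (he₁ : HasVecDerivAt e₁ e₁' t) (he₂ : HasVecDerivAt e₂ e₂' t)
    (hp₁ : HasVecDerivAt p₁ p₁' t) (hp₂ : HasVecDerivAt p₂ p₂' t)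
    (c₁ : e₁ t ⬝ᵥ e₁ t = 1) (c₂ : e₂ t ⬝ᵥ e₂ t = 1)
    (c₃ : e₁ t ⬝ᵥ e₂ t = 0) (c₄ : e₁ t ⬝ᵥ p₁ t = 0) (c₅ : e₂ t ⬝ᵥ p₂ t = 0)
    (c₆ : e₁ t ⬝ᵥ p₂ t + e₂ t ⬝ᵥ p₁ t = 0)
    (l₁₁ l₁₂ l₂₁ l₂₂ : ℝ)
    (hl₁₁ : l₁₁ = -(p₁ t ⬝ᵥ p₁ t) - e₁ t ⬝ᵥ Ξ.mulVec (e₂ t))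
    (hl₁₂ : l₁₂ = -(p₁ t ⬝ᵥ p₂ t)) (hl₂₁ : l₂₁ = -(p₁ t ⬝ᵥ p₂ t))
    (hl₂₂ : l₂₂ = -(p₂ t ⬝ᵥ p₂ t) - e₁ t ⬝ᵥ Ξ.mulVec (e₂ t))
    (heq₁ : e₁' = p₁ t - ((1 + 2 * κ) * (e₁ t ⬝ᵥ p₂ t)) • e₂ t)
    (heq₂ : e₂' = p₂ t - ((1 + 2 * κ) * (e₂ t ⬝ᵥ p₁ t)) • e₁ t)
    (heq₃ : p₁' = Ξ.mulVec (e₂ t) + ((1 + 2 * κ) * (p₁ t ⬝ᵥ e₂ t)) • p₂ t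
        + l₁₁ • e₁ t + l₁₂ • e₂ t)
    (heq₄ : p₂' = -Ξ.mulVec (e₁ t) + ((1 + 2 * κ) * (p₂ t ⬝ᵥ e₁ t)) • p₁ t
        + l₂₁ • e₁ t + l₂₂ • e₂ t) :
    HasMatDerivAt (fun s => wedge (e₁ s) (e₂ s))
      ((wedge (p₁ t) (e₁ t) + wedge (p₂ t) (e₂ t)) * wedge (e₁ t) (e₂ t)
        - wedge (e₁ t) (e₂ t) * (wedge (p₁ t) (e₁ t) + wedge (p₂ t) (e₂ t))) t ∧
    HasMatDerivAt (fun s => wedge (p₁ s) (e₁ s) + wedge (p₂ s) (e₂ s))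
      (wedge (e₁ t) (e₂ t) * Ξ - Ξ * wedge (e₁ t) (e₂ t)) t := by
  subst hl₁₂ hl₂₁ heq₁ heq₂ heq₃ heq₄
  rw [dotProduct_comm (p₁ t) (e₂ t)] at hp₁
  rw [dotProduct_comm (p₂ t) (e₁ t)] at hp₂
  have hep : e₁ t ⬝ᵥ p₁ t + e₂ t ⬝ᵥ p₂ t = 0 := by rw [c₄, c₅, add_zero]
  exact v_n2_pendulum_lie_form_general hΞ c₁ c₂ c₃ hep he₁ he₂ hp₁ hp₂
end

section
/- Let B = diag(b₁,...,bₙ) and κ ∈ ℝ. Suppose X, P : ℝ → M_{n,r}(ℝ) are differentiable curves which at time t satisfy XᵀX = I_r, XᵀP + PᵀX = 0, and the equations X' = P - (1+2κ)XPᵀX, P' = (1+2κ)PXᵀP - B²X + 2BXXᵀBX + XΛ with Λ = XᵀB²X - 2XᵀBXXᵀBX - PᵀP. Then the SO(n)-momentum map Φ = PXᵀ - XPᵀ satisfies, at time t, dΦ/dt = ½[B, (I_n - 2XXᵀ)B(I_n - 2XXᵀ)]. -/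
/-!
The map `J(X, P) = P Xᵀ - X Pᵀ` is bilinear, so `dΦ/dt = J(X', P) + J(X, P')`. It vanishes on
`(P, P)`, the two `κ`-terms cancel because `J(X A, P) = J(X, P Aᵀ)`, and `J(X, X Λ) = 0` for
symmetric `Λ`. The remaining force is `C X` with `C = 2 B X Xᵀ B - B²` symmetric; it contributes
`J(X, C X) = [C, X Xᵀ]`, which a computation in the matrix ring identifies with
`½ [B, (I - 2 X Xᵀ) B (I - 2 X Xᵀ)]`.
-/

open Matrix

namespace HasMatDerivAt

variable {l m k : Type*} {t : ℝ}

theorem sub {E : Type*} [NormedAddCommGroup E] [NormedSpace ℝ E] {F G : ℝ → Matrix m k E}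
    {F' G' : Matrix m k E} (hF : HasMatDerivAt F F' t) (hG : HasMatDerivAt G G' t) :
    HasMatDerivAt (fun s => F s - G s) (F' - G') t :=
  fun i j => (hF i j).sub (hG i j)

theorem transpose_s15 {E : Type*} [NormedAddCommGroup E] [NormedSpace ℝ E] {F : ℝ → Matrix m k E}
    {F' : Matrix m k E} (hF : HasMatDerivAt F F' t) :
    HasMatDerivAt (fun s => (F s)ᵀ) F'ᵀ t :=
  fun i j => hF j i

theorem mul {𝔸 : Type*} [NormedRing 𝔸] [NormedAlgebra ℝ 𝔸] [Fintype l]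
    {F : ℝ → Matrix m l 𝔸} {G : ℝ → Matrix l k 𝔸} {F' : Matrix m l 𝔸} {G' : Matrix l k 𝔸}
    (hF : HasMatDerivAt F F' t) (hG : HasMatDerivAt G G' t) :
    HasMatDerivAt (fun s => F s * G s) (F' * G t + F t * G') t := by
  intro i j
  simp only [Matrix.add_apply, mul_apply, ← Finset.sum_add_distrib]
  exact HasDerivAt.fun_sum fun a _ => (hF i a).mul (hG a j)

end HasMatDerivAt

section LeftMomentumMap

variable {R m k l : Type*} [CommRing R] [Fintype k] [Fintype l]

/-- The momentum map `(X, P) ↦ P Xᵀ - X Pᵀ` of the left action of the orthogonal group on pairs of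
`m × k` matrices, as a bilinear map on all pairs; the cotangent bundle of the Stiefel variety is
a subset of these. -/
def leftMomentumMap : Matrix m k R →ₗ[R] Matrix m k R →ₗ[R] Matrix m m R :=
  LinearMap.mk₂ R (fun X P => P * Xᵀ - X * Pᵀ)
    (fun X Y P => by rw [transpose_add, Matrix.mul_add, Matrix.add_mul, add_sub_add_comm])
    (fun a X P => by rw [transpose_smul, Matrix.mul_smul, Matrix.smul_mul, smul_sub])
    (fun X P Q => by rw [transpose_add, Matrix.mul_add, Matrix.add_mul, add_sub_add_comm])
    (fun a X P => by rw [transpose_smul, Matrix.mul_smul, Matrix.smul_mul, smul_sub])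

theorem leftMomentumMap_apply (X P : Matrix m k R) :
    leftMomentumMap X P = P * Xᵀ - X * Pᵀ := rfl

theorem leftMomentumMap_self (X : Matrix m k R) : leftMomentumMap X X = 0 :=
  sub_self _

theorem leftMomentumMap_mul_left (X : Matrix m l R) (A : Matrix l k R) (P : Matrix m k R) :
    leftMomentumMap (X * A) P = leftMomentumMap X (P * Aᵀ) := by
  simp only [leftMomentumMap_apply, transpose_mul, transpose_transpose, Matrix.mul_assoc]

theorem leftMomentumMap_mul_right_of_isSymm (X : Matrix m k R) {S : Matrix k k R}
    (hS : S.IsSymm) : leftMomentumMap X (X * S) = 0 := by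
  rw [leftMomentumMap_apply, transpose_mul, hS.eq, Matrix.mul_assoc, sub_self]

variable [Fintype m]

theorem leftMomentumMap_mul_left_of_isSymm {C : Matrix m m R} (hC : C.IsSymm)
    (X : Matrix m k R) : leftMomentumMap X (C * X) = ⁅C, X * Xᵀ⁆ := by
  rw [leftMomentumMap_apply, transpose_mul, hC.eq, Ring.lie_def, Matrix.mul_assoc,
    Matrix.mul_assoc]

theorem leftMomentumMap_add_eq_lie_of_isSymm (X P : Matrix m k R) (A : Matrix k k R)
    {C : Matrix m m R} (hC : C.IsSymm) {Λ : Matrix k k R} (hΛ : Λ.IsSymm) :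
    leftMomentumMap (P - X * A) P + leftMomentumMap X (P * Aᵀ + C * X + X * Λ) =
      ⁅C, X * Xᵀ⁆ := by
  rw [map_sub, LinearMap.sub_apply, map_add, map_add, leftMomentumMap_self,
    leftMomentumMap_mul_left, leftMomentumMap_mul_right_of_isSymm X hΛ,
    leftMomentumMap_mul_left_of_isSymm hC]
  abel

end LeftMomentumMap

theorem HasMatDerivAt.leftMomentumMap {𝔸 m k : Type*} [NormedCommRing 𝔸] [NormedAlgebra ℝ 𝔸]
    [Fintype k] {X P : ℝ → Matrix m k 𝔸} {X' P' : Matrix m k 𝔸} {t : ℝ}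
    (hX : HasMatDerivAt X X' t) (hP : HasMatDerivAt P P' t) :
    HasMatDerivAt (fun s => leftMomentumMap (X s) (P s))
      (leftMomentumMap X' (P t) + leftMomentumMap (X t) P') t := by
  have h := (hP.mul hX.transpose_s15).sub (hX.mul hP.transpose_s15)
  rwa [add_comm (P' * _), add_sub_add_comm] at h

theorem lie_one_sub_two_smul_conj {𝕜 A : Type*} [CommRing 𝕜] [Ring A] [Algebra 𝕜 A] (b s : A) :
    ⁅b, (1 - (2 : 𝕜) • s) * b * (1 - (2 : 𝕜) • s)⁆ =
      (2 : 𝕜) • ⁅(2 : 𝕜) • (b * s * b) - b * b, s⁆ := by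
  simp only [Ring.lie_def, mul_sub, sub_mul, mul_smul_comm, smul_mul_assoc, mul_one, one_mul,
    mul_assoc]
  module

section Symmetric

variable {R m k : Type*} [Fintype m]

theorem isSymm_rect_transpose_mul_self [NonUnitalCommSemiring R] (X : Matrix m k R) :
    (Xᵀ * X).IsSymm := by
  rw [IsSymm, transpose_mul, transpose_transpose]

theorem isSymm_mul_self_of_isSymm [NonUnitalCommSemiring R] {B : Matrix m m R} (hB : B.IsSymm) :
    (B * B).IsSymm := by
  rw [IsSymm, transpose_mul, hB.eq]

theorem isSymm_transpose_mul_mul [NonUnitalCommSemiring R] {B : Matrix m m R} (hB : B.IsSymm)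
    (X : Matrix m k R) : (Xᵀ * B * X).IsSymm := by
  rw [IsSymm, transpose_mul, transpose_mul, transpose_transpose, hB.eq, Matrix.mul_assoc]

theorem isSymm_fourthDegreeMultiplier {𝕜 : Type*} [NonUnitalCommRing R] [SMul 𝕜 R] [Fintype k]
    {B : Matrix m m R} (hB : B.IsSymm) (a : 𝕜) (X P : Matrix m k R) :
    (Xᵀ * (B * B) * X - a • (Xᵀ * B * X * (Xᵀ * B * X)) - Pᵀ * P).IsSymm := by
  have hXBBX := isSymm_transpose_mul_mul (isSymm_mul_self_of_isSymm hB) X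
  have hXBX_sq := isSymm_mul_self_of_isSymm (isSymm_transpose_mul_mul hB X)
  exact (hXBBX.sub (hXBX_sq.smul a)).sub (isSymm_rect_transpose_mul_self P)

end Symmetric

theorem fourth_degree_phi_evolution_general {𝔸 m k : Type*} [NormedCommRing 𝔸]
    [NormedAlgebra ℝ 𝔸] [Fintype m] [DecidableEq m] [Fintype k] {B : Matrix m m 𝔸}
    (hB : B.IsSymm) (c : 𝔸) {X P : ℝ → Matrix m k 𝔸} {Λ : Matrix k k 𝔸} (hΛ : Λ.IsSymm) {t : ℝ}
    (hX : HasMatDerivAt X (P t - c • (X t * ((P t)ᵀ * X t))) t)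
    (hP : HasMatDerivAt P (c • (P t * ((X t)ᵀ * P t)) - B * B * X t
      + (2 : ℝ) • (B * X t * ((X t)ᵀ * B * X t)) + X t * Λ) t) :
    HasMatDerivAt (fun s => P s * (X s)ᵀ - X s * (P s)ᵀ)
      ((1 / 2 : ℝ) •
        ⁅B, (1 - (2 : ℝ) • (X t * (X t)ᵀ)) * B * (1 - (2 : ℝ) • (X t * (X t)ᵀ))⁆) t := by
  set A := c • ((P t)ᵀ * X t) with hA
  set C := (2 : ℝ) • (B * (X t * (X t)ᵀ) * B) - B * B with hC
  have hC_symm : C.IsSymm := by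
    have hBXXB := isSymm_transpose_mul_mul (isSymm_rect_transpose_mul_self (X t)ᵀ) B
    rw [transpose_transpose, hB.eq] at hBXXB
    exact (hBXXB.smul 2).sub (isSymm_mul_self_of_isSymm hB)
  have hX' : P t - c • (X t * ((P t)ᵀ * X t)) = P t - X t * A := by
    rw [hA, Matrix.mul_smul]
  have hP' : c • (P t * ((X t)ᵀ * P t)) - B * B * X t
      + (2 : ℝ) • (B * X t * ((X t)ᵀ * B * X t)) + X t * Λ =
      P t * Aᵀ + C * X t + X t * Λ := by
    simp only [hA, hC, transpose_smul, transpose_mul, transpose_transpose, Matrix.mul_smul,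
      Matrix.sub_mul, Matrix.smul_mul, Matrix.mul_assoc]
    abel
  rw [hX'] at hX
  rw [hP'] at hP
  have hΦ := hX.leftMomentumMap hP
  rw [leftMomentumMap_add_eq_lie_of_isSymm _ _ _ hC_symm hΛ] at hΦ
  rw [lie_one_sub_two_smul_conj, smul_smul, one_div_mul_cancel two_ne_zero, one_smul]
  simpa only [leftMomentumMap_apply] using hΦ

/-- Along the flow of the fourth-degree potential system on
`V(n,r)`, the `SO(n)`-momentum map `Φ = PXᵀ - XPᵀ` satisfies
`dΦ/dt = ½[B, (I - 2XXᵀ)B(I - 2XXᵀ)]`. -/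
theorem fourth_degree_phi_evolution (n r : ℕ)
    (b : Fin n → ℝ) (B : Matrix (Fin n) (Fin n) ℝ) (hB : B = diagonal b) (κ : ℝ)
    (X P : ℝ → Matrix (Fin n) (Fin r) ℝ)
    (X' P' : Matrix (Fin n) (Fin r) ℝ) (t : ℝ)
    (hX : HasMatDerivAt X X' t) (hP : HasMatDerivAt P P' t)
    (hc1 : (X t)ᵀ * X t = 1)
    (hc2 : (X t)ᵀ * P t + (P t)ᵀ * X t = 0)
    (Λ : Matrix (Fin r) (Fin r) ℝ)
    (hΛ : Λ = (X t)ᵀ * (B * B) * X t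
        - (2 : ℝ) • ((X t)ᵀ * B * X t * ((X t)ᵀ * B * X t)) - (P t)ᵀ * P t)
    (heqX : X' = P t - (1 + 2 * κ) • (X t * ((P t)ᵀ * X t)))
    (heqP : P' = (1 + 2 * κ) • (P t * ((X t)ᵀ * P t)) - B * B * X t
        + (2 : ℝ) • (B * X t * ((X t)ᵀ * B * X t)) + X t * Λ) :
    HasMatDerivAt (fun s => P s * (X s)ᵀ - X s * (P s)ᵀ)
      ((1 / 2 : ℝ) •
        (B * ((1 - (2 : ℝ) • (X t * (X t)ᵀ)) * B * (1 - (2 : ℝ) • (X t * (X t)ᵀ)))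
          - ((1 - (2 : ℝ) • (X t * (X t)ᵀ)) * B * (1 - (2 : ℝ) • (X t * (X t)ᵀ))) * B))
      t := by
  have hB_symm : B.IsSymm := hB ▸ isSymm_diagonal b
  have hΛ_symm : Λ.IsSymm := hΛ ▸ isSymm_fourthDegreeMultiplier hB_symm (2 : ℝ) (X t) (P t)
  rw [← Ring.lie_def]
  exact fourth_degree_phi_evolution_general hB_symm (1 + 2 * κ) hΛ_symm (heqX ▸ hX) (heqP ▸ hP)
end
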